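/- Let f : ℝ^p → ℝ and g : ℝ^q → ℝ be proper, closed, convex functions, and let A ∈ ℝ^{n×p} and B ∈ ℝ^{n×q} both have full column rank. Fix μ > 0 and define L(x,y,γ) = f(x) + g(y) + γᵀ(By − Ax) + (1/(2μ))‖Ax − By‖². Suppose the sequences {x^k}, {y^k}, {γ^k} satisfy, for every k ≥ 0: x^{k+1} minimizes L(·, y^k, γ^k), y^{k+1} minimizes L(x^{k+1}, ·, γ^k), and γ^{k+1} = γ^k − (1/μ)(A x^{k+1} − B y^{k+1}). If the problem min_{x,y} f(x) + g(y) subject to Ax = By has a Kuhn–Tucker pair, then {(x^k, y^k, γ^k)} converges to a Kuhn–Tucker pair of that problem. -/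

import Mathlib

/-! The proof is the classical Lyapunov argument for ADMM. Write `v k = B y k`. Optimality of the two
subproblems says that `γ (k+1) + (v k - v (k+1)) / μ` (pulled back by `A`) and `-γ (k+1)` (pulled
back by `B`) are subgradients of `f` and `g` at the new iterates (`subgrad_of_min`). Pairing these
with the subgradients at a Kuhn–Tucker pair, and using monotonicity of `∂g` between consecutive
iterates, shows that for `k ≥ 1`

`V k = μ² ‖γ k - γs‖² + ‖v k - B ys‖²`

decreases by at least `μ² ‖γ (k+1) - γ k‖² + ‖v (k+1) - v k‖²` (`lyapunov_step`). So `(v k, γ k)` is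
bounded, successive differences vanish, and hence the residual `A x k - B y k` vanishes. Since
`A` and `B` have (continuous) linear left inverses, a convergent subsequence of `(v k, γ k)` yields
a convergent subsequence of the iterates, whose limit is a Kuhn–Tucker pair by lower
semicontinuity. For that pair `V` is antitone and tends to zero along a subsequence, so it tends to
zero, and the whole sequence converges. -/

open scoped BigOperators

noncomputable section

/-- Euclidean inner product on `Fin N → ℝ`. -/
def dotv {N : ℕ} (x y : Fin N → ℝ) : ℝ := ∑ i, x i * y i

/-- Squared Euclidean norm on `Fin N → ℝ`. -/
def sqnorm {N : ℕ} (x : Fin N → ℝ) : ℝ := ∑ i, (x i) ^ 2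

/-- `p` is a subgradient of `f` at `x`. -/
def IsSubgradientAt {N : ℕ} (f : (Fin N → ℝ) → ℝ) (p x : Fin N → ℝ) : Prop :=
  ∀ z, f x + dotv p (z - x) ≤ f z

/-- A Kuhn–Tucker pair `((xs, ys), γs)` for the problem
`min f x + g y  subject to  A x = B y`: primal feasibility together with the
KKT stationarity conditions `Aᵀ γs ∈ ∂f(xs)` and `-Bᵀ γs ∈ ∂g(ys)`. -/
def IsKTPairGen {p q n : ℕ} (f : (Fin p → ℝ) → ℝ) (g : (Fin q → ℝ) → ℝ)
    (A : Matrix (Fin n) (Fin p) ℝ) (B : Matrix (Fin n) (Fin q) ℝ)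
    (xs : Fin p → ℝ) (ys : Fin q → ℝ) (γs : Fin n → ℝ) : Prop :=
  A.mulVec xs = B.mulVec ys ∧
  IsSubgradientAt f (A.transpose.mulVec γs) xs ∧
  IsSubgradientAt g (-(B.transpose.mulVec γs)) ys

open Filter Topology

/-! ### The Euclidean inner product and norm -/

theorem dotv_transpose {m N : ℕ} (A : Matrix (Fin m) (Fin N) ℝ) (c : Fin m → ℝ) (z : Fin N → ℝ) :
    dotv (A.transpose.mulVec c) z = dotv c (A.mulVec z) := by
  change dotProduct _ _ = dotProduct _ _
  rw [Matrix.mulVec_transpose, Matrix.dotProduct_mulVec]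

theorem dotv_neg_left {N : ℕ} (c z : Fin N → ℝ) : dotv (-c) z = -dotv c z := by
  simp [dotv]

theorem continuous_dotv {N : ℕ} : Continuous fun w : (Fin N → ℝ) × (Fin N → ℝ) => dotv w.1 w.2 := by
  unfold dotv
  fun_prop

theorem continuous_sqnorm {N : ℕ} : Continuous fun w : Fin N → ℝ => sqnorm w := by
  unfold sqnorm
  fun_prop

theorem sqnorm_nonneg {N : ℕ} (w : Fin N → ℝ) : 0 ≤ sqnorm w :=
  Finset.sum_nonneg fun _ _ => sq_nonneg _

/-- The norm on the left is the sup norm. -/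
theorem norm_le_sqrt_sqnorm {N : ℕ} (w : Fin N → ℝ) : ‖w‖ ≤ √(sqnorm w) := by
  refine (pi_norm_le_iff_of_nonneg (Real.sqrt_nonneg _)).2 fun i => ?_
  refine Real.le_sqrt_of_sq_le ?_
  rw [Real.norm_eq_abs, sq_abs]
  exact Finset.single_le_sum (f := fun i => w i ^ 2) (fun _ _ => sq_nonneg _) (Finset.mem_univ i)

theorem tendsto_zero_of_sqnorm {N : ℕ} {w : ℕ → Fin N → ℝ}
    (h : Tendsto (fun k => sqnorm (w k)) atTop (𝓝 0)) : Tendsto w atTop (𝓝 0) := by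
  refine squeeze_zero_norm (fun k => norm_le_sqrt_sqnorm (w k)) ?_
  simpa using h.sqrt

/-! ### Optimality conditions and the Lyapunov decrease -/

/-- First-order optimality condition for an augmented subproblem: a minimizer of
`f x - ⟨c, A x⟩ + ‖A x - b‖² / (2 μ)` has the subgradient `Aᵀ (c - (A x - b) / μ)`. -/
theorem subgrad_of_min {N m : ℕ} {f : (Fin N → ℝ) → ℝ} (hf : ConvexOn ℝ Set.univ f)
    (A : Matrix (Fin m) (Fin N) ℝ) (b c : Fin m → ℝ) (μ : ℝ) (x₀ : Fin N → ℝ)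
    (h : ∀ x', f x₀ - dotv c (A.mulVec x₀) + (1 / (2 * μ)) * sqnorm (A.mulVec x₀ - b)
      ≤ f x' - dotv c (A.mulVec x') + (1 / (2 * μ)) * sqnorm (A.mulVec x' - b)) (z : Fin N → ℝ) :
    f x₀ + dotv (c - (1 / μ) • (A.mulVec x₀ - b)) (A.mulVec z - A.mulVec x₀) ≤ f z := by
  set D := f z - f x₀ - dotv (c - (1 / μ) • (A.mulVec x₀ - b)) (A.mulVec z - A.mulVec x₀) with hD
  set E := (1 / (2 * μ)) * sqnorm (A.mulVec z - A.mulVec x₀) with hE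
  -- Compare `x₀` with the points of the segment towards `z`, and divide by the step length.
  have key : ∀ t : ℝ, 0 < t → t ≤ 1 → 0 ≤ D + t * E := by
    intro t ht ht1
    have h1 := h ((1 - t) • x₀ + t • z)
    have h2 := hf.2 (Set.mem_univ x₀) (Set.mem_univ z) (sub_nonneg.2 ht1) ht.le (by ring)
    simp only [smul_eq_mul] at h2
    have e : A.mulVec ((1 - t) • x₀ + t • z) = (1 - t) • A.mulVec x₀ + t • A.mulVec z := by
      rw [Matrix.mulVec_add, Matrix.mulVec_smul, Matrix.mulVec_smul]
    rw [e] at h1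
    have e2 : - dotv c ((1 - t) • A.mulVec x₀ + t • A.mulVec z)
          + (1 / (2 * μ)) * sqnorm ((1 - t) • A.mulVec x₀ + t • A.mulVec z - b)
        = - dotv c (A.mulVec x₀) + (1 / (2 * μ)) * sqnorm (A.mulVec x₀ - b)
          + t * (t * E - dotv (c - (1 / μ) • (A.mulVec x₀ - b)) (A.mulVec z - A.mulVec x₀)) := by
      rw [hE]
      simp only [dotv, sqnorm, Finset.mul_sum, ← Finset.sum_add_distrib, ← Finset.sum_neg_distrib,
        ← Finset.sum_sub_distrib]
      refine Finset.sum_congr rfl fun i _ => ?_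
      simp only [Pi.add_apply, Pi.sub_apply, Pi.smul_apply, smul_eq_mul]
      ring
    have h3 : 0 ≤ t * (D + t * E) := by
      rw [hD]
      linarith
    exact nonneg_of_mul_nonneg_right h3 ht
  have hlim : Tendsto (fun t : ℝ => D + t * E) (𝓝[>] 0) (𝓝 D) := by
    have : Continuous fun t : ℝ => D + t * E := by fun_prop
    simpa using (this.tendsto 0).mono_left nhdsWithin_le_nhds
  have : 0 ≤ D := by
    refine ge_of_tendsto hlim ?_
    filter_upwards [Ioc_mem_nhdsGT (zero_lt_one' ℝ)] with t ht using key t ht.1 ht.2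
  linarith

/-- The vector form of the Lyapunov decrease. Here `u`, `v`, `γ₁` are the new `A x`, `B y` and
multiplier, `v₀`, `γ₀` the old ones and `a = A xs = B ys`. The hypothesis `h1` is the sum of the
four subgradient inequalities linking the new iterate to the Kuhn–Tucker pair and `h2` is
monotonicity of `∂g`. -/
theorem lyapunov_step {n : ℕ} {μ : ℝ} (hμ : 0 < μ) {u v v₀ a γ₀ γ₁ γs : Fin n → ℝ}
    (hγ : γ₁ = γ₀ - (1 / μ) • (u - v))
    (h1 : dotv (γ₁ + (1 / μ) • (v₀ - v)) (a - u) + dotv γs (u - a) - dotv γ₁ (a - v)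
      - dotv γs (v - a) ≤ 0)
    (h2 : 0 ≤ dotv (γ₁ - γ₀) (v₀ - v)) :
    μ ^ 2 * sqnorm (γ₁ - γs) + sqnorm (v - a) + (μ ^ 2 * sqnorm (γ₁ - γ₀) + sqnorm (v - v₀))
      ≤ μ ^ 2 * sqnorm (γ₀ - γs) + sqnorm (v₀ - a) := by
  have hu : u = v + μ • (γ₀ - γ₁) := by
    rw [hγ]
    ext i
    simp only [Pi.add_apply, Pi.sub_apply, Pi.smul_apply, smul_eq_mul]
    field_simp
    ring
  have e : μ ^ 2 * sqnorm (γ₁ - γs) + sqnorm (v - a)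
        + (μ ^ 2 * sqnorm (γ₁ - γ₀) + sqnorm (v - v₀))
        - (μ ^ 2 * sqnorm (γ₀ - γs) + sqnorm (v₀ - a))
      = 2 * μ * (dotv (γ₁ + (1 / μ) • (v₀ - v)) (a - u) + dotv γs (u - a) - dotv γ₁ (a - v)
      - dotv γs (v - a)) - 2 * μ * dotv (γ₁ - γ₀) (v₀ - v) := by
    rw [hu]
    simp only [dotv, sqnorm, Finset.mul_sum, ← Finset.sum_add_distrib, ← Finset.sum_sub_distrib]
    refine Finset.sum_congr rfl fun i _ => ?_
    simp only [Pi.add_apply, Pi.sub_apply, Pi.smul_apply, smul_eq_mul]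
    field_simp
    ring
  have h3 := mul_nonneg hμ.le h2
  have h4 := mul_nonneg hμ.le (sub_nonneg.2 h1)
  linarith

/-! ### Passing to the limit -/

theorem le_of_lsc_of_tendsto {N : ℕ} {f : (Fin N → ℝ) → ℝ} (hf : LowerSemicontinuous f)
    {w : ℕ → Fin N → ℝ} {wl : Fin N → ℝ} (hw : Tendsto w atTop (𝓝 wl)) {s : ℕ → ℝ} {sl t : ℝ}
    (hs : Tendsto s atTop (𝓝 sl)) (h : ∀ k, f (w k) + s k ≤ t) : f wl + sl ≤ t := by
  have : f wl ≤ t - sl := by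
    refine le_of_forall_lt fun c hc => ?_
    obtain ⟨c', hc', hc''⟩ := exists_between hc
    refine hc'.trans_le (ge_of_tendsto (hs.const_sub t) ?_)
    filter_upwards [hw.eventually (hf wl c' hc'')] with k hk
    linarith [h k]
  linarith

theorem exists_continuous_leftInverse {N m : ℕ} (A : Matrix (Fin m) (Fin N) ℝ)
    (hA : ∀ x : Fin N → ℝ, A.mulVec x = 0 → x = 0) :
    ∃ F : (Fin m → ℝ) →ₗ[ℝ] (Fin N → ℝ), Continuous F ∧ ∀ x, F (A.mulVec x) = x := by
  obtain ⟨F, hF⟩ := A.mulVecLin.exists_leftInverse_of_injective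
    (LinearMap.ker_eq_bot'.2 fun x hx => hA x (by simpa using hx))
  exact ⟨F, F.continuous_of_finiteDimensional, fun x => by simpa using LinearMap.congr_fun hF x⟩

/-! ### Convergence -/

set_option maxHeartbeats 1000000 in
/-- Convergence of the two-block ADAL (ADMM) method for
`min f x + g y  subject to  A x = B y`, where `A` and `B` have full column rank. -/
theorem adal_two_block_convergence_general {p q n : ℕ}
    (f : (Fin p → ℝ) → ℝ) (g : (Fin q → ℝ) → ℝ)
    (hf : ConvexOn ℝ Set.univ f) (hg : ConvexOn ℝ Set.univ g)
    (hfl : LowerSemicontinuous f) (hgl : LowerSemicontinuous g)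
    (A : Matrix (Fin n) (Fin p) ℝ) (B : Matrix (Fin n) (Fin q) ℝ)
    (hA : ∀ x : Fin p → ℝ, A.mulVec x = 0 → x = 0)
    (hB : ∀ y : Fin q → ℝ, B.mulVec y = 0 → y = 0)
    (μ : ℝ) (hμ : 0 < μ)
    (L : (Fin p → ℝ) → (Fin q → ℝ) → (Fin n → ℝ) → ℝ)
    (hL : ∀ x y γ, L x y γ =
      f x + g y + dotv γ (B.mulVec y - A.mulVec x)
        + (1 / (2 * μ)) * sqnorm (A.mulVec x - B.mulVec y))
    (x : ℕ → Fin p → ℝ) (y : ℕ → Fin q → ℝ) (γ : ℕ → Fin n → ℝ)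
    (hx : ∀ k x', L (x (k + 1)) (y k) (γ k) ≤ L x' (y k) (γ k))
    (hy : ∀ k y', L (x (k + 1)) (y (k + 1)) (γ k) ≤ L (x (k + 1)) y' (γ k))
    (hγ : ∀ k, γ (k + 1) = γ k - (1 / μ) • (A.mulVec (x (k + 1)) - B.mulVec (y (k + 1))))
    (hKT : ∃ xs ys γs, IsKTPairGen f g A B xs ys γs) :
    ∃ xs ys γs, IsKTPairGen f g A B xs ys γs ∧
      Filter.Tendsto (fun k => (x k, y k, γ k)) Filter.atTop (nhds (xs, ys, γs)) := by
  -- Optimality of the two subproblems.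
  have sf : ∀ k z, f (x (k + 1)) + dotv (γ (k + 1) + (1 / μ) •
      (B.mulVec (y k) - B.mulVec (y (k + 1)))) (A.mulVec z - A.mulVec (x (k + 1))) ≤ f z := by
    intro k z
    have h := subgrad_of_min hf A (B.mulVec (y k)) (γ k) μ (x (k + 1)) (fun x' => by
      have h := hx k x'
      rw [hL, hL] at h
      simp only [dotv, Pi.sub_apply, mul_sub, Finset.sum_sub_distrib] at h ⊢
      linarith) z
    convert h using 3
    rw [hγ]
    ext i
    simp only [Pi.add_apply, Pi.sub_apply, Pi.smul_apply, smul_eq_mul]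
    ring
  have sg : ∀ k z, g (y (k + 1)) - dotv (γ (k + 1)) (B.mulVec z - B.mulVec (y (k + 1))) ≤ g z := by
    intro k z
    have h := subgrad_of_min hg B (A.mulVec (x (k + 1))) (-γ k) μ (y (k + 1)) (fun y' => by
      have h := hy k y'
      rw [hL, hL] at h
      have e : ∀ a b : Fin n → ℝ, sqnorm (a - b) = sqnorm (b - a) := fun a b =>
        Finset.sum_congr rfl fun i _ => by simp only [Pi.sub_apply]; ring
      rw [e _ (A.mulVec _), e _ (A.mulVec _)]
      simp only [dotv, Pi.sub_apply, Pi.neg_apply, neg_mul, Finset.sum_neg_distrib, mul_sub,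
        Finset.sum_sub_distrib] at h ⊢
      linarith) z
    refine le_trans (le_of_eq ?_) h
    rw [sub_eq_add_neg, hγ]
    congr 1
    simp only [dotv, ← Finset.sum_neg_distrib]
    refine Finset.sum_congr rfl fun i _ => ?_
    simp only [Pi.neg_apply, Pi.sub_apply, Pi.smul_apply, smul_eq_mul]
    ring
  -- Lyapunov decrease relative to an arbitrary Kuhn–Tucker pair. The index is shifted because the
  -- initial `γ 0` need not be related to a subgradient of `g` at `y 0`.
  have lyap : ∀ xs ys γs, IsKTPairGen f g A B xs ys γs → ∀ k,
      μ ^ 2 * sqnorm (γ (k + 2) - γs) + sqnorm (B.mulVec (y (k + 2)) - B.mulVec ys)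
        + (μ ^ 2 * sqnorm (γ (k + 2) - γ (k + 1))
          + sqnorm (B.mulVec (y (k + 2)) - B.mulVec (y (k + 1))))
      ≤ μ ^ 2 * sqnorm (γ (k + 1) - γs) + sqnorm (B.mulVec (y (k + 1)) - B.mulVec ys) := by
    rintro xs ys γs ⟨hfeas, hsf, hsg⟩ k
    refine lyapunov_step hμ (hγ (k + 1)) ?_ ?_
    · have h1 := sf (k + 1) xs
      have h2 := sg (k + 1) ys
      have h3 := hsf (x (k + 2))
      have h4 := hsg (y (k + 2))
      rw [dotv_transpose, Matrix.mulVec_sub, hfeas] at h3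
      rw [← Matrix.mulVec_neg, dotv_transpose, Matrix.mulVec_sub, dotv_neg_left] at h4
      rw [hfeas] at h1
      simp only [add_assoc, Nat.reduceAdd] at h1 h2
      linarith
    · have h1 := sg k (y (k + 2))
      have h2 := sg (k + 1) (y (k + 1))
      simp only [add_assoc, Nat.reduceAdd] at h1 h2
      simp only [dotv, Pi.sub_apply, sub_mul, mul_sub, Finset.sum_sub_distrib] at h1 h2 ⊢
      linarith
  have anti : ∀ xs ys γs, IsKTPairGen f g A B xs ys γs → Antitone fun k =>
      μ ^ 2 * sqnorm (γ (k + 1) - γs) + sqnorm (B.mulVec (y (k + 1)) - B.mulVec ys) := by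
    intro xs ys γs h
    refine antitone_nat_of_succ_le fun k => ?_
    have h1 := lyap xs ys γs h k
    have h2 := mul_nonneg (sq_nonneg μ) (sqnorm_nonneg (γ (k + 2) - γ (k + 1)))
    have h3 := sqnorm_nonneg (B.mulVec (y (k + 2)) - B.mulVec (y (k + 1)))
    simp only [add_assoc, Nat.reduceAdd] at h1 h2 h3 ⊢
    linarith
  have hμ2 : 0 < μ ^ 2 := by positivity
  -- If `V` tends to zero, so do both of its parts.
  have parts : ∀ s t : ℕ → Fin n → ℝ,
      Tendsto (fun k => μ ^ 2 * sqnorm (s k) + sqnorm (t k)) atTop (𝓝 0) →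
      Tendsto s atTop (𝓝 0) ∧ Tendsto t atTop (𝓝 0) := by
    intro s t h
    constructor
    · refine tendsto_zero_of_sqnorm ?_
      have h' := h.const_mul (μ ^ 2)⁻¹
      rw [mul_zero] at h'
      refine squeeze_zero (fun k => sqnorm_nonneg _) (fun k => ?_) h'
      rw [mul_add, inv_mul_cancel_left₀ hμ2.ne']
      have := mul_nonneg (inv_nonneg.2 hμ2.le) (sqnorm_nonneg (t k))
      linarith
    · refine tendsto_zero_of_sqnorm (squeeze_zero (fun k => sqnorm_nonneg _) (fun k => ?_) h)
      have := mul_nonneg hμ2.le (sqnorm_nonneg (s k))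
      linarith
  obtain ⟨xo, yo, γo, hKTo⟩ := hKT
  set V : ℕ → ℝ := fun k =>
      μ ^ 2 * sqnorm (γ (k + 1) - γo) + sqnorm (B.mulVec (y (k + 1)) - B.mulVec yo) with hV
  have V0 : ∀ k, 0 ≤ V k := fun k =>
    add_nonneg (mul_nonneg hμ2.le (sqnorm_nonneg _)) (sqnorm_nonneg _)
  have hdiff := parts (fun k => γ (k + 2) - γ (k + 1))
    (fun k => B.mulVec (y (k + 2)) - B.mulVec (y (k + 1))) (by
      have hc := tendsto_atTop_ciInf (anti xo yo γo hKTo) ⟨0, by rintro _ ⟨k, rfl⟩; exact V0 k⟩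
      have hd := hc.sub (hc.comp (tendsto_add_atTop_nat 1))
      rw [sub_self] at hd
      refine squeeze_zero (fun k => add_nonneg (mul_nonneg hμ2.le (sqnorm_nonneg _))
        (sqnorm_nonneg _)) (fun k => ?_) hd
      have := lyap xo yo γo hKTo k
      simp only [Function.comp, add_assoc, Nat.reduceAdd]
      linarith)
  obtain ⟨hdγ, hdv⟩ := hdiff
  -- The primal residual is a multiple of the multiplier increment.
  have hres : ∀ k, A.mulVec (x (k + 1)) = B.mulVec (y (k + 1)) - μ • (γ (k + 1) - γ k) := by
    intro k
    rw [hγ k]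
    ext i
    simp only [Pi.sub_apply, Pi.smul_apply, smul_eq_mul]
    field_simp
    ring
  obtain ⟨FA, hFAc, hFA⟩ := exists_continuous_leftInverse A hA
  obtain ⟨FB, hFBc, hFB⟩ := exists_continuous_leftInverse B hB
  have hAc : Continuous A.mulVec := A.mulVecLin.continuous_of_finiteDimensional
  have hBc : Continuous B.mulVec := B.mulVecLin.continuous_of_finiteDimensional
  -- Along any index sequence on which `B y` and `γ` converge, all iterates converge.
  have recover : ∀ (φ : ℕ → ℕ), Tendsto φ atTop atTop → ∀ vl : Fin n → ℝ,
      Tendsto (fun j => B.mulVec (y (φ j + 2))) atTop (𝓝 vl) →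
      Tendsto (fun j => y (φ j + 2)) atTop (𝓝 (FB vl)) ∧
      Tendsto (fun j => x (φ j + 2)) atTop (𝓝 (FA vl)) ∧ B.mulVec (FB vl) = vl ∧
      A.mulVec (FA vl) = vl := by
    intro φ hφ vl hv
    have h1 : Tendsto (fun j => y (φ j + 2)) atTop (𝓝 (FB vl)) := by
      simpa only [Function.comp_def, hFB] using (hFBc.tendsto vl).comp hv
    have hu : Tendsto (fun j => A.mulVec (x (φ j + 2))) atTop (𝓝 vl) := by
      have h := hv.sub ((hdγ.comp hφ).const_smul μ)
      rw [smul_zero, sub_zero] at h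
      exact h.congr fun j => (hres (φ j + 1)).symm
    have h2 : Tendsto (fun j => x (φ j + 2)) atTop (𝓝 (FA vl)) := by
      simpa only [Function.comp_def, hFA] using (hFAc.tendsto vl).comp hu
    exact ⟨h1, h2, tendsto_nhds_unique ((hBc.tendsto _).comp h1) hv,
      tendsto_nhds_unique ((hAc.tendsto _).comp h2) hu⟩
  -- A convergent subsequence of `(B y, γ)`.
  obtain ⟨⟨vl, γl⟩, -, φ, hφ, hlim⟩ : ∃ w ∈ closure (Metric.closedBall (B.mulVec yo) (√(V 0)) ×ˢ
      Metric.closedBall γo (√((μ ^ 2)⁻¹ * V 0))), ∃ φ : ℕ → ℕ, StrictMono φ ∧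
      Tendsto ((fun k => (B.mulVec (y (k + 2)), γ (k + 2))) ∘ φ) atTop (𝓝 w) := by
    refine tendsto_subseq_of_bounded
      (Metric.isBounded_closedBall.prod Metric.isBounded_closedBall) fun k => ?_
    have hle : V (k + 1) ≤ V 0 := anti xo yo γo hKTo (Nat.zero_le _)
    have e1 := mul_nonneg hμ2.le (sqnorm_nonneg (γ (k + 2) - γo))
    have e2 := sqnorm_nonneg (B.mulVec (y (k + 2)) - B.mulVec yo)
    have e3 : V (k + 1) = μ ^ 2 * sqnorm (γ (k + 2) - γo)
      + sqnorm (B.mulVec (y (k + 2)) - B.mulVec yo) := rfl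
    refine ⟨?_, ?_⟩
    · rw [mem_closedBall_iff_norm]
      exact (norm_le_sqrt_sqnorm _).trans (Real.sqrt_le_sqrt (by linarith))
    · rw [mem_closedBall_iff_norm]
      refine (norm_le_sqrt_sqnorm _).trans (Real.sqrt_le_sqrt ?_)
      rw [le_inv_mul_iff₀ hμ2]
      linarith
  have hvφ : Tendsto (fun j => B.mulVec (y (φ j + 2))) atTop (𝓝 vl) := hlim.fst_nhds
  have hγφ : Tendsto (fun j => γ (φ j + 2)) atTop (𝓝 γl) := hlim.snd_nhds
  obtain ⟨hyφ, hxφ, hBl, hAl⟩ := recover φ hφ.tendsto_atTop vl hvφ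
  have hKTl : IsKTPairGen f g A B (FA vl) (FB vl) γl := by
    refine ⟨hAl.trans hBl.symm, fun z => ?_, fun z => ?_⟩
    · rw [dotv_transpose, Matrix.mulVec_sub]
      refine le_of_lsc_of_tendsto hfl hxφ ?_ fun j => sf (φ j + 1) z
      refine (continuous_dotv.tendsto (γl, _)).comp (Tendsto.prodMk_nhds ?_
        (((hAc.tendsto _).comp hxφ).const_sub _))
      have h := hγφ.sub ((hdv.comp hφ.tendsto_atTop).const_smul (1 / μ))
      rw [smul_zero, sub_zero] at h
      refine h.congr fun j => ?_
      simp only [Function.comp, add_assoc, Nat.reduceAdd]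
      rw [sub_eq_add_neg, ← smul_neg, neg_sub]
    · rw [← Matrix.mulVec_neg, dotv_transpose, Matrix.mulVec_sub]
      refine le_of_lsc_of_tendsto hgl hyφ
        (s := fun j => dotv (-γ (φ j + 2)) (B.mulVec z - B.mulVec (y (φ j + 2)))) ?_ fun j => ?_
      · exact (continuous_dotv.tendsto (-γl, _)).comp (Tendsto.prodMk_nhds hγφ.neg
          (((hBc.tendsto _).comp hyφ).const_sub _))
      · have h := sg (φ j + 1) z
        rw [dotv_neg_left, ← sub_eq_add_neg]
        exact h
  -- The Lyapunov function of the limit pair vanishes along `φ`, hence along the whole sequence.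
  have hW : Tendsto (fun k => μ ^ 2 * sqnorm (γ (k + 1) - γl)
      + sqnorm (B.mulVec (y (k + 1)) - B.mulVec (FB vl))) atTop (𝓝 0) := by
    refine (tendsto_iff_tendsto_subseq_of_antitone (anti _ _ _ hKTl)
      ((tendsto_add_atTop_nat 1).comp hφ.tendsto_atTop)).2 ?_
    have h1 := (continuous_sqnorm.tendsto _).comp (hγφ.sub_const γl)
    have h2 := (continuous_sqnorm.tendsto _).comp (hvφ.sub_const (B.mulVec (FB vl)))
    have hz : sqnorm (0 : Fin n → ℝ) = 0 := by simp [sqnorm]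
    rw [hBl, sub_self, hz] at h2
    rw [sub_self, hz] at h1
    have h := (h1.const_mul (μ ^ 2)).add h2
    rw [mul_zero, add_zero] at h
    rw [hBl]
    exact h
  obtain ⟨hγ', hv'⟩ := parts _ _ hW
  have hγf : Tendsto (fun k => γ (k + 1)) atTop (𝓝 γl) := by
    simpa using hγ'.add_const γl
  have hvf : Tendsto (fun k => B.mulVec (y (k + 1))) atTop (𝓝 vl) := by
    rw [hBl] at hv'
    simpa using hv'.add_const vl
  obtain ⟨hyf, hxf, -, -⟩ := recover id tendsto_id vl (hvf.comp (tendsto_add_atTop_nat 1))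
  refine ⟨_, _, _, hKTl, ?_⟩
  exact ((tendsto_add_atTop_iff_nat 2).1 hxf).prodMk_nhds
    (((tendsto_add_atTop_iff_nat 2).1 hyf).prodMk_nhds ((tendsto_add_atTop_iff_nat 1).1 hγf))

end
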